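/- Suppose s(v) ≥ OPT(k,l) for every vertex v of G. Then α ≤ 1/m, where α = μ(X) is the proportion of vertices v of G with ρ(v) ≥ 1/2. -/

import Mathlib

open scoped BigOperators

/-- The arc relation of the oriented star `S_{k,l}` on `Fin (k+l+1)`:
vertex `0` is the center, vertices `1,…,k` are the out-leaves and
vertices `k+1,…,k+l` are the in-leaves. -/
def StarArc (k l : ℕ) (a b : Fin (k + l + 1)) : Prop :=
  (a.val = 0 ∧ 1 ≤ b.val ∧ b.val ≤ k) ∨ (b.val = 0 ∧ k + 1 ≤ a.val)

/-- `φ` witnesses an induced copy of `S_{k,l}` in the digraph with arc relation `A`: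
it is injective and maps arcs to arcs and non-arcs to non-arcs. -/
def IsStarEmb (k l : ℕ) {V : Type*} (A : V → V → Prop) (φ : Fin (k + l + 1) → V) : Prop :=
  Function.Injective φ ∧ ∀ a b, StarArc k l a b ↔ A (φ a) (φ b)

/-- `s(G)`: the probability that a uniformly random map `V(S_{k,l}) → V(G)`
induces a copy of `S_{k,l}`. -/
noncomputable def starProb (k l : ℕ) (V : Type*) [Fintype V] (A : V → V → Prop) : ℝ :=
  (Nat.card {φ : Fin (k + l + 1) → V // IsStarEmb k l A φ} : ℝ) /
    (Fintype.card V : ℝ) ^ (k + l + 1)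

/-- The probability that a uniformly random map induces a copy of `S_{k,l}`
and moreover has property `P`. -/
noncomputable def starProbOn (k l : ℕ) {V : Type*} [Fintype V] (A : V → V → Prop)
    (P : (Fin (k + l + 1) → V) → Prop) : ℝ :=
  (Nat.card {φ : Fin (k + l + 1) → V // IsStarEmb k l A φ ∧ P φ} : ℝ) /
    (Fintype.card V : ℝ) ^ (k + l + 1)

/-- `s(z→v) = Pr[φ ∈ 𝒮 | φ z = v]`. -/
noncomputable def sCond (k l : ℕ) {V : Type*} [Fintype V] (A : V → V → Prop)
    (z : Fin (k + l + 1)) (v : V) : ℝ :=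
  (Nat.card {φ : Fin (k + l + 1) → V // IsStarEmb k l A φ ∧ φ z = v} : ℝ) /
    (Fintype.card V : ℝ) ^ (k + l)

/-- `Pr[φ ∈ 𝒮 ∧ P φ | φ(c) = v]`, where `c = 0` is the center of the star. -/
noncomputable def sCondOn (k l : ℕ) {V : Type*} [Fintype V] (A : V → V → Prop) (v : V)
    (P : (Fin (k + l + 1) → V) → Prop) : ℝ :=
  (Nat.card {φ : Fin (k + l + 1) → V // IsStarEmb k l A φ ∧ φ 0 = v ∧ P φ} : ℝ) /
    (Fintype.card V : ℝ) ^ (k + l)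

open scoped Fin.NatCast in
/-- `s(v) = (s(c→v) + l·s(i→v) + k·s(o→v))/(m+1)`, where the center is `0`,
`k+1` is an in-leaf and `1` is an out-leaf. -/
noncomputable def sVert (k l : ℕ) {V : Type*} [Fintype V] (A : V → V → Prop) (v : V) : ℝ :=
  (sCond k l A 0 v + l * sCond k l A ((k + 1 : ℕ) : Fin (k + l + 1)) v
      + k * sCond k l A 1 v) / ((k : ℝ) + l + 1)

/-- `ρ(v)`: the proportion of vertices adjacent to `v`. -/
noncomputable def rho {V : Type*} [Fintype V] (A : V → V → Prop) (v : V) : ℝ :=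
  (Nat.card {u : V // A v u ∨ A u v} : ℝ) / (Fintype.card V : ℝ)

/-- `ρ⁺_B(v)`: the proportion of vertices that are out-neighbours of `v` lying in `B`. -/
noncomputable def rhoPIn {V : Type*} [Fintype V] (A : V → V → Prop) (B : Set V) (v : V) : ℝ :=
  (Nat.card {u : V // A v u ∧ u ∈ B} : ℝ) / (Fintype.card V : ℝ)

/-- `ρ⁻_B(v)`: the proportion of vertices that are in-neighbours of `v` lying in `B`. -/
noncomputable def rhoMIn {V : Type*} [Fintype V] (A : V → V → Prop) (B : Set V) (v : V) : ℝ :=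
  (Nat.card {u : V // A u v ∧ u ∈ B} : ℝ) / (Fintype.card V : ℝ)

/-- `ρ_B(v)`: the proportion of vertices adjacent to `v` lying in `B`. -/
noncomputable def rhoIn {V : Type*} [Fintype V] (A : V → V → Prop) (B : Set V) (v : V) : ℝ :=
  (Nat.card {u : V // (A v u ∨ A u v) ∧ u ∈ B} : ℝ) / (Fintype.card V : ℝ)

/-- `μ(B) = |B|/n`. -/
noncomputable def muSet {V : Type*} [Fintype V] (B : Set V) : ℝ :=
  (Nat.card B : ℝ) / (Fintype.card V : ℝ)

/-- `X`: the set of vertices of large degree, `ρ(v) ≥ 1/2`. -/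
def bigX {V : Type*} [Fintype V] (A : V → V → Prop) : Set V := {v | 1 / 2 ≤ rho A v}

/-- `Y = V(G) \ X`. -/
def bigY {V : Type*} [Fintype V] (A : V → V → Prop) : Set V := (bigX A)ᶜ

/-- `α = μ(X)`. -/
noncomputable def alphaX {V : Type*} [Fintype V] (A : V → V → Prop) : ℝ := muSet (bigX A)

/-- `D = min_{x ∈ X} ρ(x)`. -/
noncomputable def Dmin {V : Type*} [Fintype V] (A : V → V → Prop) : ℝ :=
  sInf (rho A '' bigX A)

/-- `β = max_{y ∈ Y} ρ_Y(y)`. -/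
noncomputable def betaY {V : Type*} [Fintype V] (A : V → V → Prop) : ℝ :=
  sSup ((fun y => rhoIn A (bigY A) y) '' bigY A)

/-- `γ = min_{x ∈ X} ρ⁻_Y(x)`. -/
noncomputable def gammaX {V : Type*} [Fintype V] (A : V → V → Prop) : ℝ :=
  sInf ((fun x => rhoMIn A (bigY A) x) '' bigX A)

/-- `S = (m+1)·min_{v ∈ V(G)} s(v)`. -/
noncomputable def Smin (k l : ℕ) {V : Type*} [Fintype V] (A : V → V → Prop) : ℝ :=
  ((k : ℝ) + l + 1) * sInf (Set.range (sVert k l A))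

/-- `S₁ = min_{x ∈ X} (ρ⁺_Y(x))^k (ρ⁻_Y(x))^l`. -/
noncomputable def S1min (k l : ℕ) {V : Type*} [Fintype V] (A : V → V → Prop) : ℝ :=
  sInf ((fun x => rhoPIn A (bigY A) x ^ k * rhoMIn A (bigY A) x ^ l) '' bigX A)

/-- `S₂ = S₁ − ((m−1)/((m+1)·C(m,k)))·(α+β)(1−α)(1−D)^{m−2}`. -/
noncomputable def S2min (k l : ℕ) {V : Type*} [Fintype V] (A : V → V → Prop) : ℝ :=
  S1min k l A - (((k : ℝ) + l - 1) / (((k : ℝ) + l + 1) * (Nat.choose (k + l) k : ℝ)))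
    * (alphaX A + betaY A) * (1 - alphaX A) * (1 - Dmin A) ^ (k + l - 2)

/-- `λ₀ = k^k l^l / m^m`. -/
noncomputable def lam0 (k l : ℕ) : ℝ := (k : ℝ) ^ k * (l : ℝ) ^ l / ((k : ℝ) + l) ^ (k + l)

/-- `λ₁ = k^k l (l−1)^{l−1} / (m−1)^{m−1}` (with the convention `0⁰ = 1`). -/
noncomputable def lam1 (k l : ℕ) : ℝ :=
  (k : ℝ) ^ k * (l : ℝ) * ((l : ℝ) - 1) ^ (l - 1) / ((k : ℝ) + l - 1) ^ (k + l - 1)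

/-- The edge density `ρ(Z)` of a set of vertices `Z`: the number of unordered adjacent
pairs in `Z` divided by `C(|Z|,2)`. -/
noncomputable def densSet {V : Type*} [Fintype V] (A : V → V → Prop) (Z : Set V) : ℝ :=
  ((Nat.card {p : V × V // p.1 ∈ Z ∧ p.2 ∈ Z ∧ (A p.1 p.2 ∨ A p.2 p.1)} : ℝ) / 2) /
    (Nat.choose (Nat.card Z) 2 : ℝ)

/-- `d = 1 − (E_{x ∈ X} ρ⁻_Y(x))/(1−α)`. -/
noncomputable def dXY {V : Type*} [Fintype V] (A : V → V → Prop) : ℝ :=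
  1 - ((∑ᶠ x ∈ bigX A, rhoMIn A (bigY A) x) / (Nat.card (bigX A) : ℝ)) / (1 - alphaX A)

/-- `OPT(k,l)`. -/
noncomputable def OPT (k l : ℕ) : ℝ :=
  if k = l then
    (1 / 2 ^ (2 * k)) *
      sSup {y : ℝ | ∃ a ∈ Set.Icc (0 : ℝ) 1, y = a * (1 - a) ^ (2 * k) + (1 - a) * a ^ (2 * k)}
  else
    sSup {y : ℝ | ∃ a ∈ Set.Icc (0 : ℝ) (1 / 2),
      ∃ d ∈ Set.Icc (0 : ℝ) ((k : ℝ) / ((k : ℝ) + (l : ℝ))),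
      y = a * (1 - a) ^ (k + l) * d ^ k * (1 - d) ^ l
        + (((k : ℝ) - 1) ^ (k - 1) * (l : ℝ) ^ l / ((k : ℝ) + (l : ℝ) - 1) ^ (k + l - 1))
          * (1 - a) * a ^ (k + l) * (1 - d)}

/-!
A random map pins `v` either at the center or at a leaf of the star. By AM-GM, the stars centered at
`v` contribute at most `lam0 k l * ρ ^ m` to `s(v)`, and those with a leaf at `v` contribute at most
`lam0 k l * leafFactor m * ρ * (1 - ρ) ^ (m - 1)`, since the remaining leaves avoid the
neighbourhood of `v`; here `ρ = ρ(v)`. As `OPT k l` is at least the value of its objective at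
`α = 1 / (m + 1)`, the hypothesis on `s(v)` gives
`(m / (m + 1)) ^ m ≤ ρ ^ m + leafFactor m * ρ * (1 - ρ) ^ (m - 1)`, which fails for
`1 / 2 ≤ ρ ≤ 3 / 4`. So vertices of `X` miss at most a quarter of the graph, and a star centered at
`x ∈ X` with a leaf in `X` is very rare. Nearly all stars centered at `x` therefore have all their
leaves in `Y`, and `ρ ^ m` can be replaced by `(1 - α) ^ m` up to an error of
`leafFactor m * (1 / 4) ^ (m - 1)`. The resulting inequality fails as soon as `α > 1 / m`.
-/

lemma natCard_subtype_le_sum {α ι : Type*} [Finite α] [Fintype ι] {p : α → Prop}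
    {r : ι → α → Prop} (h : ∀ a, p a → ∃ i, r i a) :
    Nat.card {a // p a} ≤ ∑ i, Nat.card {a // r i a} := by
  choose i hi using h
  rw [← Nat.card_sigma]
  refine Nat.card_le_card_of_injective
    (fun a : {a // p a} => (⟨i a a.2, a, hi a a.2⟩ : Σ i, {a // r i a})) fun a b hab => ?_
  exact Subtype.ext (congrArg (fun x : Σ i, {a // r i a} => (x.2 : α)) hab)

lemma sum_le_of_natCast_mul_le {n : ℕ} {f : Fin n → ℝ} {c : ℝ} (hc : 0 ≤ c)
    (h : ∀ i, n * f i ≤ c) : ∑ i, f i ≤ c := by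
  rcases Nat.eq_zero_or_pos n with rfl | hn
  · simpa using hc
  refine le_of_mul_le_mul_left (a := (n : ℝ)) ?_ (by positivity)
  calc n * ∑ i, f i = ∑ i, n * f i := Finset.mul_sum _ _ _
    _ ≤ ∑ _i : Fin n, c := Finset.sum_le_sum fun i _ => h i
    _ = n * c := by simp

lemma le_sSup_image_of_continuousOn {X : Type*} [TopologicalSpace X] {K : Set X} (hK : IsCompact K)
    {f : X → ℝ} (hf : ContinuousOn f K) {x : X} (hx : x ∈ K) : f x ≤ sSup (f '' K) :=
  le_csSup (hK.bddAbove_image hf) (Set.mem_image_of_mem f hx)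

section Estimates

lemma lam0_nonneg (k l : ℕ) : 0 ≤ lam0 k l := by
  unfold lam0
  positivity

lemma lam0_pos {k l : ℕ} (hk : 1 ≤ k) (hl : 1 ≤ l) : 0 < lam0 k l := by
  unfold lam0
  positivity

lemma lam0_comm (k l : ℕ) : lam0 k l = lam0 l k := by
  simp only [lam0, mul_comm, add_comm]

lemma lam0_mul_div_succ_pow (k l : ℕ) :
    lam0 k l * (((k : ℝ) + l) / ((k : ℝ) + l + 1)) ^ (k + l) =
      (k : ℝ) ^ k * (l : ℝ) ^ l / ((k : ℝ) + l + 1) ^ (k + l) := by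
  have hpow : ((k : ℝ) + l) ^ (k + l) ≠ 0 := by
    exact_mod_cast (Nat.pow_self_pos (n := k + l)).ne'
  rw [lam0, div_pow]
  field_simp

/-- Weighted AM-GM for `p / k` with weight `k` and `q / l` with weight `l`. -/
lemma pow_mul_pow_le_lam0_mul (k l : ℕ) {p q : ℝ} (hp : 0 ≤ p) (hq : 0 ≤ q) :
    p ^ k * q ^ l ≤ lam0 k l * (p + q) ^ (k + l) := by
  rcases Nat.eq_zero_or_pos (k + l) with hkl | hkl
  · obtain ⟨rfl, rfl⟩ : k = 0 ∧ l = 0 := by omega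
    simp [lam0]
  set s : ℝ := k + l with hs
  have hs0 : 0 < s := by rw [hs]; exact_mod_cast hkl
  have rescale (a : ℕ) {x : ℝ} (hx : 0 ≤ x) : (a / s) * (x / a) ≤ x / s :=
    calc (a / s) * (x / a) = (a / a : ℝ) * (x / s) := by ring
      _ ≤ 1 * (x / s) := by gcongr; exact div_self_le_one _
      _ = x / s := one_mul _
  have root_pow (a : ℕ) {x : ℝ} (hx : 0 ≤ x) : (x ^ (a / s)) ^ (k + l) = x ^ a := by
    rw [← Real.rpow_mul_natCast hx, Nat.cast_add, ← hs, div_mul_cancel₀ _ hs0.ne',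
      Real.rpow_natCast]
  have amgm : (p / k) ^ ((k : ℝ) / s) * (q / l) ^ ((l : ℝ) / s) ≤ (p + q) / s :=
    calc _ ≤ (k / s) * (p / k) + (l / s) * (q / l) :=
          Real.geom_mean_le_arith_mean2_weighted (by positivity) (by positivity) (by positivity)
            (by positivity) (by rw [← add_div, ← hs, div_self hs0.ne'])
      _ ≤ p / s + q / s := add_le_add (rescale k hp) (rescale l hq)
      _ = (p + q) / s := (add_div _ _ _).symm
  have unscale (a : ℕ) (x : ℝ) : x ^ a = (a : ℝ) ^ a * (x / a) ^ a := by
    rcases Nat.eq_zero_or_pos a with rfl | ha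
    · simp
    · rw [← mul_pow, mul_div_cancel₀ _ (by positivity)]
  calc p ^ k * q ^ l
      = (k : ℝ) ^ k * (l : ℝ) ^ l
          * ((p / k) ^ ((k : ℝ) / s) * (q / l) ^ ((l : ℝ) / s)) ^ (k + l) := by
        rw [mul_pow, root_pow k (by positivity), root_pow l (by positivity), unscale k p,
          unscale l q]
        ring
    _ ≤ (k : ℝ) ^ k * (l : ℝ) ^ l * ((p + q) / s) ^ (k + l) := by gcongr
    _ = lam0 k l * (p + q) ^ (k + l) := by rw [lam0, div_pow]; ring

/-- The factor `m ^ m / (m - 1) ^ (m - 1)` lost against `lam0` when one of the `m` leaves of a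
star is pinned. The inner subtraction is real, so `leafFactor 0 = 1`. -/
noncomputable def leafFactor (m : ℕ) : ℝ := (m : ℝ) ^ m / ((m : ℝ) - 1) ^ (m - 1)

lemma leafFactor_succ (j : ℕ) : leafFactor (j + 1) = ((j : ℝ) + 1) ^ (j + 1) / (j : ℝ) ^ j := by
  simp [leafFactor]

lemma leafFactor_nonneg (m : ℕ) : 0 ≤ leafFactor m := by
  rcases m with _ | j
  · simp [leafFactor]
  · rw [leafFactor_succ]
    positivity

lemma mul_pow_pred_mul_pow_le {k : ℕ} (hk : 1 ≤ k) (l : ℕ) {p q : ℝ} (hp : 0 ≤ p) (hq : 0 ≤ q) :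
    k * (p ^ (k - 1) * q ^ l) ≤ lam0 k l * leafFactor (k + l) * (p + q) ^ (k + l - 1) := by
  obtain ⟨j, rfl⟩ := Nat.exists_eq_add_of_le' hk
  have hconst : lam0 (j + 1) l * leafFactor (j + 1 + l) =
      ((j + 1 : ℕ) : ℝ) ^ (j + 1) * (l : ℝ) ^ l / ((j : ℝ) + l) ^ (j + l) := by
    have hbase : ((j + 1 : ℕ) : ℝ) + l = ((j + l : ℕ) : ℝ) + 1 := by push_cast; ring
    rw [Nat.add_right_comm, leafFactor_succ, lam0, hbase, Nat.add_right_comm j 1 l,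
      Nat.cast_add j l]
    field_simp
  rw [hconst, Nat.add_sub_cancel, Nat.add_right_comm, Nat.add_sub_cancel]
  calc ((j + 1 : ℕ) : ℝ) * (p ^ j * q ^ l)
      ≤ ((j + 1 : ℕ) : ℝ) * (lam0 j l * (p + q) ^ (j + l)) := by
        exact mul_le_mul_of_nonneg_left (pow_mul_pow_le_lam0_mul j l hp hq) (Nat.cast_nonneg _)
    _ = ((j + 1 : ℕ) : ℝ) * (j : ℝ) ^ j * (l : ℝ) ^ l / ((j : ℝ) + l) ^ (j + l)
          * (p + q) ^ (j + l) := by rw [lam0]; ring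
    _ ≤ ((j + 1 : ℕ) : ℝ) * ((j + 1 : ℕ) : ℝ) ^ j * (l : ℝ) ^ l / ((j : ℝ) + l) ^ (j + l)
          * (p + q) ^ (j + l) := by
        gcongr
        exact Nat.le_succ j
    _ = _ := by ring

lemma one_add_inv_pow_le_exp_one (n : ℕ) : (1 + 1 / (n : ℝ)) ^ n ≤ Real.exp 1 := by
  rcases Nat.eq_zero_or_pos n with rfl | hn
  · simp
  calc (1 + 1 / (n : ℝ)) ^ n ≤ Real.exp (1 / n) ^ n := by
        gcongr
        rw [add_comm]
        exact Real.add_one_le_exp _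
    _ = Real.exp 1 := by rw [← Real.exp_nat_mul, mul_one_div_cancel (by positivity)]

lemma leafFactor_le {m : ℕ} (hm : 1 ≤ m) : leafFactor m ≤ Real.exp 1 * m := by
  obtain ⟨j, rfl⟩ := Nat.exists_eq_add_of_le' hm
  have hfactor : leafFactor (j + 1) = (1 + 1 / (j : ℝ)) ^ j * (j + 1 : ℕ) := by
    rcases Nat.eq_zero_or_pos j with rfl | hj
    · simp [leafFactor_succ]
    · rw [leafFactor_succ, one_add_div (by positivity), div_pow, pow_succ]
      push_cast
      ring
  rw [hfactor]
  gcongr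
  exact one_add_inv_pow_le_exp_one j

lemma inv_exp_one_le_div_succ_pow (m : ℕ) :
    (Real.exp 1)⁻¹ ≤ ((m : ℝ) / ((m : ℝ) + 1)) ^ m := by
  rcases Nat.eq_zero_or_pos m with rfl | hm
  · simp [inv_le_one_iff₀]
  have hinv : (m : ℝ) / ((m : ℝ) + 1) = (1 + 1 / (m : ℝ))⁻¹ := by field_simp
  rw [hinv, inv_pow]
  gcongr
  exact one_add_inv_pow_le_exp_one m

lemma antitone_succ_mul_pow {q : ℝ} (hq : 0 ≤ q) (hq' : q ≤ 1 / 2) :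
    Antitone fun j : ℕ => ((j : ℝ) + 1) * q ^ j := by
  refine antitone_nat_of_succ_le fun j => ?_
  have hratio : ((j : ℝ) + 2) * q ≤ j + 1 := by
    have : (0 : ℝ) ≤ j := Nat.cast_nonneg j
    nlinarith
  calc (((j + 1 : ℕ) : ℝ) + 1) * q ^ (j + 1) = ((j : ℝ) + 2) * q * q ^ j := by push_cast; ring
    _ ≤ ((j : ℝ) + 1) * q ^ j := by gcongr

lemma leafFactor_mul_pow_le {m : ℕ} (hm : 6 ≤ m) {q : ℝ} (hq : 0 ≤ q) (hq' : q ≤ 1 / 2) :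
    leafFactor m * q ^ (m - 1) ≤ Real.exp 1 * (6 * q ^ 5) := by
  obtain ⟨j, rfl⟩ := Nat.exists_eq_add_of_le' hm
  have hanti := antitone_succ_mul_pow hq hq' (Nat.le_add_left 5 j)
  calc leafFactor (j + 6) * q ^ (j + 5) ≤ Real.exp 1 * (j + 6 : ℕ) * q ^ (j + 5) := by
        gcongr
        exact leafFactor_le (by omega)
    _ = Real.exp 1 * ((((j + 5 : ℕ) : ℝ) + 1) * q ^ (j + 5)) := by push_cast; ring
    _ ≤ Real.exp 1 * ((((5 : ℕ) : ℝ) + 1) * q ^ 5) := by gcongr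
    _ = Real.exp 1 * (6 * q ^ 5) := by norm_num

lemma pow_add_leafFactor_mul_lt {m : ℕ} (hm : 6 ≤ m) {r : ℝ} (hr : 1 / 2 ≤ r) (hr' : r ≤ 3 / 4) :
    r ^ m + leafFactor m * (r * (1 - r) ^ (m - 1)) < ((m : ℝ) / ((m : ℝ) + 1)) ^ m := by
  have hr0 : 0 ≤ 1 - r := by linarith
  have he := Real.exp_one_lt_d9
  have sextic : r ^ 6 + 2.7182818286 * (r * (6 * (1 - r) ^ 5)) < 2.7182818286⁻¹ := by
    rcases le_total r (3 / 5) with h | h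
    · calc _ ≤ (3 / 5 : ℝ) ^ 6 + 2.7182818286 * (3 / 5 * (6 * (1 - 1 / 2) ^ 5)) := by gcongr
        _ < _ := by norm_num
    · calc _ ≤ (3 / 4 : ℝ) ^ 6 + 2.7182818286 * (3 / 4 * (6 * (1 - 3 / 5) ^ 5)) := by gcongr
        _ < _ := by norm_num
  calc r ^ m + leafFactor m * (r * (1 - r) ^ (m - 1))
      = r ^ m + r * (leafFactor m * (1 - r) ^ (m - 1)) := by ring
    _ ≤ r ^ 6 + r * (Real.exp 1 * (6 * (1 - r) ^ 5)) := by
        gcongr ?_ + r * ?_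
        · exact pow_le_pow_of_le_one (by linarith) (by linarith) hm
        · exact leafFactor_mul_pow_le hm hr0 (by linarith)
    _ = r ^ 6 + Real.exp 1 * (r * (6 * (1 - r) ^ 5)) := by ring
    _ ≤ r ^ 6 + 2.7182818286 * (r * (6 * (1 - r) ^ 5)) := by gcongr
    _ < 2.7182818286⁻¹ := sextic
    _ ≤ (Real.exp 1)⁻¹ := by gcongr
    _ ≤ _ := inv_exp_one_le_div_succ_pow m

/-- The ratio of the two bases is `1 + 1 / (m ^ 2 - 1) ≥ 1 + 1 / m ^ 2`, to which Bernoulli's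
inequality applies. -/
lemma one_sub_inv_pow_mul_le {m : ℕ} (hm : 1 ≤ m) :
    (1 - 1 / (m : ℝ)) ^ m * (1 + 1 / m) ≤ ((m : ℝ) / ((m : ℝ) + 1)) ^ m := by
  have hm' : (1 : ℝ) ≤ m := by exact_mod_cast hm
  have hbase : 0 ≤ 1 - 1 / (m : ℝ) := by
    rw [sub_nonneg, div_le_one (by positivity)]
    exact hm'
  calc (1 - 1 / (m : ℝ)) ^ m * (1 + 1 / m)
      = (1 - 1 / (m : ℝ)) ^ m * (1 + m * (1 / (m : ℝ) ^ 2)) := by field_simp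
    _ ≤ (1 - 1 / (m : ℝ)) ^ m * (1 + 1 / (m : ℝ) ^ 2) ^ m := by
        gcongr
        exact one_add_mul_le_pow (le_trans (by norm_num) (by positivity : (0 : ℝ) ≤ _)) m
    _ = ((1 - 1 / (m : ℝ)) * (1 + 1 / (m : ℝ) ^ 2)) ^ m := (mul_pow _ _ _).symm
    _ ≤ ((m : ℝ) / ((m : ℝ) + 1)) ^ m := by
        gcongr
        rw [le_div_iff₀ (by positivity)]
        field_simp
        nlinarith

lemma one_sub_inv_pow_add_leafFactor_mul_lt {m : ℕ} (hm : 6 ≤ m) :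
    (1 - 1 / (m : ℝ)) ^ m + 2 * (leafFactor m * (1 / 4) ^ (m - 1)) <
      ((m : ℝ) / ((m : ℝ) + 1)) ^ m := by
  have hm0 : (0 : ℝ) < m := by exact_mod_cast (by omega : 0 < m)
  have he := Real.exp_one_lt_d9
  set S := ((m : ℝ) / ((m : ℝ) + 1)) ^ m
  have first_term : (1 - 1 / (m : ℝ)) ^ m * (m + 1) ≤ S * m :=
    calc (1 - 1 / (m : ℝ)) ^ m * (m + 1) = (1 - 1 / (m : ℝ)) ^ m * (1 + 1 / m) * m := by
          field_simp
      _ ≤ S * m := by gcongr; exact one_sub_inv_pow_mul_le (by omega)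
  have second_term : 2 * (leafFactor m * (1 / 4) ^ (m - 1)) * (m + 1) < 2.7182818286⁻¹ := by
    have hleaf := leafFactor_mul_pow_le hm (q := 1 / 2) (by norm_num) le_rfl
    have hanti := antitone_succ_mul_pow (q := 1 / 2) (by norm_num) le_rfl hm
    have hsplit : (1 / 4 : ℝ) ^ (m - 1) = 2 * ((1 / 2) ^ (m - 1) * (1 / 2) ^ m) := by
      obtain ⟨j, rfl⟩ := Nat.exists_eq_add_of_le' hm
      rw [show (1 / 4 : ℝ) = 1 / 2 * (1 / 2) by norm_num, mul_pow]
      simp only [Nat.reduceSubDiff, pow_succ]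
      ring
    calc 2 * (leafFactor m * (1 / 4) ^ (m - 1)) * (m + 1)
        = 4 * (leafFactor m * (1 / 2) ^ (m - 1)) * ((m + 1) * (1 / 2) ^ m) := by
          rw [hsplit]; ring
      _ ≤ 4 * (Real.exp 1 * (6 * (1 / 2) ^ 5)) * (((6 : ℕ) + 1) * (1 / 2) ^ 6) := by gcongr
      _ ≤ 4 * (2.7182818286 * (6 * (1 / 2) ^ 5)) * (((6 : ℕ) + 1) * (1 / 2) ^ 6) := by gcongr
      _ < 2.7182818286⁻¹ := by norm_num
  have S_ge : (2.7182818286 : ℝ)⁻¹ ≤ S :=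
    calc (2.7182818286 : ℝ)⁻¹ ≤ (Real.exp 1)⁻¹ := by gcongr
      _ ≤ S := inv_exp_one_le_div_succ_pow m
  refine lt_of_mul_lt_mul_right (a := (m : ℝ) + 1) ?_ (by positivity)
  linarith

end Estimates

section Densities

variable {V : Type*} [Fintype V] {A : V → V → Prop} {S T : Set V}

lemma muSet_nonneg (S : Set V) : 0 ≤ muSet S := by
  unfold muSet
  positivity

lemma muSet_mono (h : S ⊆ T) : muSet S ≤ muSet T := by
  unfold muSet
  gcongr
  exact Nat.card_mono T.toFinite h

lemma muSet_empty : muSet (∅ : Set V) = 0 := by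
  simp [muSet]

lemma muSet_singleton (w : V) : muSet {w} = 1 / Fintype.card V := by
  simp [muSet]

lemma muSet_union_of_disjoint (h : Disjoint S T) : muSet (S ∪ T) = muSet S + muSet T := by
  simp only [muSet, Nat.card_coe_set_eq, Set.ncard_union_eq h, Nat.cast_add, add_div]

lemma muSet_univ [Nonempty V] : muSet (Set.univ : Set V) = 1 := by
  simp [muSet]

lemma muSet_compl [Nonempty V] (S : Set V) : muSet Sᶜ = 1 - muSet S := by
  rw [eq_sub_iff_add_eq', ← muSet_union_of_disjoint disjoint_compl_right, Set.union_compl_self,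
    muSet_univ]

lemma muSet_le_one [Nonempty V] (S : Set V) : muSet S ≤ 1 :=
  (muSet_mono S.subset_univ).trans_eq muSet_univ

lemma prod_muSet_update_singleton {n : ℕ} (S : Set V) (w : V) (i : Fin n) :
    ∏ j, muSet (Function.update (fun _ => S) i {w} j) = muSet S ^ (n - 1) / Fintype.card V := by
  simp only [Function.apply_update (fun _ => muSet) (fun _ => S) i {w},
    Finset.prod_update_of_mem (Finset.mem_univ i), Finset.prod_const, muSet_singleton]
  rw [← Finset.compl_eq_univ_sdiff, Finset.card_compl, Finset.card_singleton, Fintype.card_fin,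
    one_div_mul_eq_div]

lemma sum_le_muSet_mul {S : Set V} [Fintype S] {f : S → ℝ} {c : ℝ}
    (hf : ∀ w, f w ≤ c / Fintype.card V) : ∑ w, f w ≤ muSet S * c :=
  calc ∑ w, f w ≤ Fintype.card S • (c / Fintype.card V) :=
        Finset.sum_le_card_nsmul _ _ _ fun w _ => hf w
    _ = muSet S * c := by
        rw [nsmul_eq_mul, muSet, Nat.card_eq_fintype_card, mul_div_assoc', div_mul_eq_mul_div]

lemma rho_le_one (A : V → V → Prop) (v : V) : rho A v ≤ 1 :=
  have : Nonempty V := ⟨v⟩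
  muSet_le_one {u | A v u ∨ A u v}

lemma rho_mul_one_sub_pow_le {v : V} {δ : ℝ} (hδ : 1 - rho A v ≤ δ) (n : ℕ) :
    rho A v * (1 - rho A v) ^ n ≤ δ ^ n := by
  have hrho := sub_nonneg.2 (rho_le_one A v)
  calc rho A v * (1 - rho A v) ^ n ≤ 1 * (1 - rho A v) ^ n := by
        gcongr
        exact rho_le_one A v
    _ = (1 - rho A v) ^ n := one_mul _
    _ ≤ δ ^ n := by gcongr

lemma rhoPIn_nonneg (A : V → V → Prop) (B : Set V) (v : V) : 0 ≤ rhoPIn A B v :=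
  muSet_nonneg {u | A v u ∧ u ∈ B}

lemma rhoMIn_nonneg (A : V → V → Prop) (B : Set V) (v : V) : 0 ≤ rhoMIn A B v :=
  muSet_nonneg {u | A u v ∧ u ∈ B}

lemma rhoIn_nonneg (A : V → V → Prop) (B : Set V) (v : V) : 0 ≤ rhoIn A B v :=
  muSet_nonneg {u | (A v u ∨ A u v) ∧ u ∈ B}

lemma rhoPIn_add_rhoMIn (hA : ∀ u v, A u v → ¬ A v u) (B : Set V) (v : V) :
    rhoPIn A B v + rhoMIn A B v = rhoIn A B v := by
  have hdisj : Disjoint {u | A v u ∧ u ∈ B} {u | A u v ∧ u ∈ B} :=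
    Set.disjoint_left.2 fun u hout hin => hA v u hout.1 hin.1
  have hunion : {u | A v u ∧ u ∈ B} ∪ {u | A u v ∧ u ∈ B} = {u | (A v u ∨ A u v) ∧ u ∈ B} :=
    Set.ext fun u => or_and_right.symm
  exact (muSet_union_of_disjoint hdisj).symm.trans (congrArg muSet hunion)

lemma rhoIn_le_muSet (A : V → V → Prop) (B : Set V) (v : V) : rhoIn A B v ≤ muSet B :=
  muSet_mono (S := {u | (A v u ∨ A u v) ∧ u ∈ B}) fun _ hu => hu.2

lemma rhoIn_le_rho (A : V → V → Prop) (B : Set V) (v : V) : rhoIn A B v ≤ rho A v :=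
  muSet_mono (S := {u | (A v u ∨ A u v) ∧ u ∈ B}) (T := {u | A v u ∨ A u v}) fun _ hu => hu.1

/-- The set of vertices not adjacent to `w`, including `w` itself in an oriented graph. The leaves
of a star other than `w` lie in it whenever `w` is a leaf. -/
def nonNbrs (A : V → V → Prop) (w : V) : Set V := {u | A w u ∨ A u w}ᶜ

lemma muSet_nonNbrs (A : V → V → Prop) (w : V) : muSet (nonNbrs A w) = 1 - rho A w :=
  have : Nonempty V := ⟨w⟩
  muSet_compl {u | A w u ∨ A u w}

end Densities

section Stars

variable {k l : ℕ}

lemma starArc_zero_out (i : Fin k) : StarArc k l 0 (Fin.castAdd l i).succ :=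
  Or.inl ⟨rfl, by simp, by simp⟩

lemma starArc_in_zero (j : Fin l) : StarArc k l (Fin.natAdd k j).succ 0 :=
  Or.inr ⟨rfl, by simp⟩

lemma not_starArc_succ_succ (i j : Fin (k + l)) : ¬ StarArc k l i.succ j.succ := by
  simp [StarArc]

variable {V : Type*} {A : V → V → Prop} {φ : Fin (k + l + 1) → V}

lemma IsStarEmb.arc_out (h : IsStarEmb k l A φ) (i : Fin k) :
    A (φ 0) (φ (Fin.castAdd l i).succ) :=
  (h.2 _ _).1 (starArc_zero_out i)

lemma IsStarEmb.arc_in (h : IsStarEmb k l A φ) (j : Fin l) :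
    A (φ (Fin.natAdd k j).succ) (φ 0) :=
  (h.2 _ _).1 (starArc_in_zero j)

lemma IsStarEmb.mem_nonNbrs (h : IsStarEmb k l A φ) (i j : Fin (k + l)) :
    φ i.succ ∈ nonNbrs A (φ j.succ) := by
  rintro (hji | hij)
  · exact not_starArc_succ_succ j i ((h.2 _ _).2 hji)
  · exact not_starArc_succ_succ i j ((h.2 _ _).2 hij)

variable [Fintype V] {v w : V} {P : (Fin (k + l + 1) → V) → Prop}

lemma sCond_zero_eq_sCondOn (v : V) : sCond k l A 0 v = sCondOn k l A v fun _ => True := by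
  simp only [sCond, sCondOn, and_true]

lemma sCondOn_le_prod_muSet {T : Fin (k + l) → Set V}
    (hT : ∀ φ, IsStarEmb k l A φ → φ 0 = v → P φ → ∀ i, φ i.succ ∈ T i) :
    sCondOn k l A v P ≤ ∏ i, muSet (T i) := by
  have hcount : Nat.card {φ // IsStarEmb k l A φ ∧ φ 0 = v ∧ P φ} ≤ ∏ i, Nat.card (T i) := by
    rw [← Nat.card_pi]
    refine Nat.card_le_card_of_injective
      (fun φ i => ⟨φ.1 i.succ, hT φ.1 φ.2.1 φ.2.2.1 φ.2.2.2 i⟩) fun φ ψ h => ?_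
    refine Subtype.ext (funext (Fin.cases (φ.2.2.1.trans ψ.2.2.1.symm) fun i => ?_))
    exact congrArg Subtype.val (congrFun h i)
  simp only [muSet, Finset.prod_div_distrib, Finset.prod_const, Finset.card_univ, Fintype.card_fin]
  unfold sCondOn
  gcongr
  exact_mod_cast hcount

lemma sCondOn_forall_mem_le (B : Set V) :
    sCondOn k l A v (fun φ => ∀ i : Fin (k + l), φ i.succ ∈ B) ≤
      rhoPIn A B v ^ k * rhoMIn A B v ^ l := by
  refine (sCondOn_le_prod_muSet (T := Fin.append (fun _ => {u | A v u ∧ u ∈ B})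
    (fun _ => {u | A u v ∧ u ∈ B})) ?_).trans_eq ?_
  · rintro φ hφ rfl hB i
    refine Fin.addCases (fun i => ?_) (fun j => ?_) i
    · simpa only [Fin.append_left] using ⟨hφ.arc_out i, hB _⟩
    · simpa only [Fin.append_right] using ⟨hφ.arc_in j, hB _⟩
  · simp only [Fin.prod_univ_add, Fin.append_left, Fin.append_right, Finset.prod_const,
      Finset.card_univ, Fintype.card_fin]
    rfl

lemma sCondOn_out_eq_le (i : Fin k) (v w : V) :
    sCondOn k l A v (fun φ => φ (Fin.castAdd l i).succ = w) ≤
      rhoPIn A (nonNbrs A w) v ^ (k - 1) * rhoMIn A (nonNbrs A w) v ^ l / Fintype.card V := by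
  refine (sCondOn_le_prod_muSet (T := Fin.append
    (Function.update (fun _ => {u | A v u ∧ u ∈ nonNbrs A w}) i {w})
    (fun _ => {u | A u v ∧ u ∈ nonNbrs A w})) ?_).trans_eq ?_
  · rintro φ hφ rfl rfl a
    refine Fin.addCases (fun j => ?_) (fun j => ?_) a
    · rw [Fin.append_left]
      rcases eq_or_ne j i with rfl | hj
      · simp
      · simpa only [Function.update_of_ne hj] using ⟨hφ.arc_out j, hφ.mem_nonNbrs _ _⟩
    · simpa only [Fin.append_right] using ⟨hφ.arc_in j, hφ.mem_nonNbrs _ _⟩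
  · simp only [Fin.prod_univ_add, Fin.append_left, Fin.append_right, Finset.prod_const,
      Finset.card_univ, Fintype.card_fin, prod_muSet_update_singleton]
    exact div_mul_eq_mul_div _ _ _

lemma sCondOn_in_eq_le (j : Fin l) (v w : V) :
    sCondOn k l A v (fun φ => φ (Fin.natAdd k j).succ = w) ≤
      rhoMIn A (nonNbrs A w) v ^ (l - 1) * rhoPIn A (nonNbrs A w) v ^ k / Fintype.card V := by
  refine (sCondOn_le_prod_muSet (T := Fin.append
    (fun _ => {u | A v u ∧ u ∈ nonNbrs A w})
    (Function.update (fun _ => {u | A u v ∧ u ∈ nonNbrs A w}) j {w})) ?_).trans_eq ?_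
  · rintro φ hφ rfl rfl a
    refine Fin.addCases (fun i => ?_) (fun i => ?_) a
    · simpa only [Fin.append_left] using ⟨hφ.arc_out i, hφ.mem_nonNbrs _ _⟩
    · rw [Fin.append_right]
      rcases eq_or_ne i j with rfl | hi
      · simp
      · simpa only [Function.update_of_ne hi] using ⟨hφ.arc_in i, hφ.mem_nonNbrs _ _⟩
  · simp only [Fin.prod_univ_add, Fin.append_left, Fin.append_right, Finset.prod_const,
      Finset.card_univ, Fintype.card_fin, prod_muSet_update_singleton]
    exact mul_div_left_comm _ _ _ |>.trans (mul_div_assoc _ _ _).symm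

lemma mul_sCondOn_out_eq_le (hA : ∀ u v, A u v → ¬ A v u) (i : Fin k) (v w : V) :
    k * sCondOn k l A v (fun φ => φ (Fin.castAdd l i).succ = w) ≤
      lam0 k l * leafFactor (k + l) * (1 - rho A w) ^ (k + l - 1) / Fintype.card V := by
  have hP := rhoPIn_nonneg A (nonNbrs A w) v
  have hM := rhoMIn_nonneg A (nonNbrs A w) v
  have hsum : rhoPIn A (nonNbrs A w) v + rhoMIn A (nonNbrs A w) v ≤ 1 - rho A w :=
    (rhoPIn_add_rhoMIn hA _ v).trans_le ((rhoIn_le_muSet A _ v).trans_eq (muSet_nonNbrs A w))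
  have hlam := mul_nonneg (lam0_nonneg k l) (leafFactor_nonneg (k + l))
  calc k * sCondOn k l A v (fun φ => φ (Fin.castAdd l i).succ = w)
      ≤ k * (rhoPIn A (nonNbrs A w) v ^ (k - 1) * rhoMIn A (nonNbrs A w) v ^ l
          / Fintype.card V) := by gcongr; exact sCondOn_out_eq_le i v w
    _ = k * (rhoPIn A (nonNbrs A w) v ^ (k - 1) * rhoMIn A (nonNbrs A w) v ^ l)
          / Fintype.card V := (mul_div_assoc _ _ _).symm
    _ ≤ lam0 k l * leafFactor (k + l)
          * (rhoPIn A (nonNbrs A w) v + rhoMIn A (nonNbrs A w) v) ^ (k + l - 1)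
          / Fintype.card V :=
        div_le_div_of_nonneg_right (mul_pow_pred_mul_pow_le i.pos l hP hM) (Nat.cast_nonneg _)
    _ ≤ lam0 k l * leafFactor (k + l) * (1 - rho A w) ^ (k + l - 1) / Fintype.card V := by gcongr

lemma mul_sCondOn_in_eq_le (hA : ∀ u v, A u v → ¬ A v u) (j : Fin l) (v w : V) :
    l * sCondOn k l A v (fun φ => φ (Fin.natAdd k j).succ = w) ≤
      lam0 k l * leafFactor (k + l) * (1 - rho A w) ^ (k + l - 1) / Fintype.card V := by
  have hP := rhoPIn_nonneg A (nonNbrs A w) v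
  have hM := rhoMIn_nonneg A (nonNbrs A w) v
  have hsum : rhoMIn A (nonNbrs A w) v + rhoPIn A (nonNbrs A w) v ≤ 1 - rho A w := by
    rw [add_comm, rhoPIn_add_rhoMIn hA, ← muSet_nonNbrs]
    exact rhoIn_le_muSet A _ v
  have hlam := mul_nonneg (lam0_nonneg l k) (leafFactor_nonneg (l + k))
  calc l * sCondOn k l A v (fun φ => φ (Fin.natAdd k j).succ = w)
      ≤ l * (rhoMIn A (nonNbrs A w) v ^ (l - 1) * rhoPIn A (nonNbrs A w) v ^ k
          / Fintype.card V) := by gcongr; exact sCondOn_in_eq_le j v w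
    _ = l * (rhoMIn A (nonNbrs A w) v ^ (l - 1) * rhoPIn A (nonNbrs A w) v ^ k)
          / Fintype.card V := (mul_div_assoc _ _ _).symm
    _ ≤ lam0 l k * leafFactor (l + k)
          * (rhoMIn A (nonNbrs A w) v + rhoPIn A (nonNbrs A w) v) ^ (l + k - 1)
          / Fintype.card V :=
        div_le_div_of_nonneg_right (mul_pow_pred_mul_pow_le j.pos k hM hP) (Nat.cast_nonneg _)
    _ ≤ lam0 l k * leafFactor (l + k) * (1 - rho A w) ^ (l + k - 1) / Fintype.card V := by gcongr
    _ = _ := by rw [lam0_comm, add_comm l k]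

lemma sCondOn_le_sum {ι : Type*} [Fintype ι] {Q : ι → (Fin (k + l + 1) → V) → Prop}
    (h : ∀ φ, IsStarEmb k l A φ → φ 0 = v → P φ → ∃ i, Q i φ) :
    sCondOn k l A v P ≤ ∑ i, sCondOn k l A v (Q i) := by
  have hcount : Nat.card {φ // IsStarEmb k l A φ ∧ φ 0 = v ∧ P φ} ≤
      ∑ i, Nat.card {φ // IsStarEmb k l A φ ∧ φ 0 = v ∧ Q i φ} :=
    natCard_subtype_le_sum fun φ ⟨hφ, hv, hφP⟩ => (h φ hφ hv hφP).imp fun _ hi => ⟨hφ, hv, hi⟩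
  simp only [sCondOn, ← Finset.sum_div]
  gcongr
  exact_mod_cast hcount

lemma sCond_le_sum {S : Set V} [Fintype S] {z : Fin (k + l + 1)}
    (h : ∀ φ, IsStarEmb k l A φ → φ z = w → φ 0 ∈ S) :
    sCond k l A z w ≤ ∑ u : S, sCondOn k l A u fun φ => φ z = w := by
  have hcount : Nat.card {φ // IsStarEmb k l A φ ∧ φ z = w} ≤
      ∑ u : S, Nat.card {φ // IsStarEmb k l A φ ∧ φ 0 = u ∧ φ z = w} :=
    natCard_subtype_le_sum fun φ ⟨hφ, hw⟩ => ⟨⟨φ 0, h φ hφ hw⟩, hφ, rfl, hw⟩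
  simp only [sCond, sCondOn, ← Finset.sum_div]
  gcongr
  exact_mod_cast hcount

lemma mul_sCondOn_le_muSet_mul {S : Set V} {z : Fin (k + l + 1)} {a c : ℝ} (ha : 0 ≤ a)
    (hP : ∀ φ, IsStarEmb k l A φ → φ 0 = v → P φ → φ z ∈ S)
    (hS : ∀ w ∈ S, a * sCondOn k l A v (fun φ => φ z = w) ≤ c / Fintype.card V) :
    a * sCondOn k l A v P ≤ muSet S * c := by
  classical
  calc a * sCondOn k l A v P ≤ a * ∑ w : S, sCondOn k l A v fun φ => φ z = w := by
        gcongr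
        exact sCondOn_le_sum fun φ hφ hv hφP => ⟨⟨φ z, hP φ hφ hv hφP⟩, rfl⟩
    _ = ∑ w : S, a * sCondOn k l A v fun φ => φ z = w := Finset.mul_sum _ _ _
    _ ≤ muSet S * c := sum_le_muSet_mul fun w => hS w w.2

lemma mul_sCond_le_muSet_mul {S : Set V} {z : Fin (k + l + 1)} {a c : ℝ} (ha : 0 ≤ a)
    (hz : ∀ φ, IsStarEmb k l A φ → φ z = w → φ 0 ∈ S)
    (hS : ∀ u ∈ S, a * sCondOn k l A u (fun φ => φ z = w) ≤ c / Fintype.card V) :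
    a * sCond k l A z w ≤ muSet S * c := by
  classical
  calc a * sCond k l A z w ≤ a * ∑ u : S, sCondOn k l A u fun φ => φ z = w := by
        gcongr
        exact sCond_le_sum hz
    _ = ∑ u : S, a * sCondOn k l A u fun φ => φ z = w := Finset.mul_sum _ _ _
    _ ≤ muSet S * c := sum_le_muSet_mul fun u => hS u u.2

lemma mul_sCond_out_le (hA : ∀ u v, A u v → ¬ A v u) (i : Fin k) (w : V) :
    k * sCond k l A (Fin.castAdd l i).succ w ≤ rhoMIn A Set.univ w *
      (lam0 k l * leafFactor (k + l) * (1 - rho A w) ^ (k + l - 1)) :=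
  mul_sCond_le_muSet_mul (S := {u | A u w ∧ u ∈ Set.univ}) (Nat.cast_nonneg k)
    (fun _ hφ hw => ⟨hw ▸ hφ.arc_out i, trivial⟩) fun u _ => mul_sCondOn_out_eq_le hA i u w

lemma mul_sCond_in_le (hA : ∀ u v, A u v → ¬ A v u) (j : Fin l) (w : V) :
    l * sCond k l A (Fin.natAdd k j).succ w ≤ rhoPIn A Set.univ w *
      (lam0 k l * leafFactor (k + l) * (1 - rho A w) ^ (k + l - 1)) :=
  mul_sCond_le_muSet_mul (S := {u | A w u ∧ u ∈ Set.univ}) (Nat.cast_nonneg l)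
    (fun _ hφ hw => ⟨hw ▸ hφ.arc_in j, trivial⟩) fun u _ => mul_sCondOn_in_eq_le hA j u w

open scoped Fin.NatCast in
lemma mul_sCond_leaves_le (hk : 1 ≤ k) (hl : 1 ≤ l) (hA : ∀ u v, A u v → ¬ A v u) (w : V) :
    l * sCond k l A ((k + 1 : ℕ) : Fin (k + l + 1)) w + k * sCond k l A 1 w ≤
      lam0 k l * (leafFactor (k + l) * (rho A w * (1 - rho A w) ^ (k + l - 1))) := by
  have hout : (1 : Fin (k + l + 1)) = (Fin.castAdd l (⟨0, hk⟩ : Fin k)).succ := by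
    rw [Fin.ext_iff, Fin.val_one', Nat.mod_eq_of_lt (by omega)]
    rfl
  have hin : ((k + 1 : ℕ) : Fin (k + l + 1)) = (Fin.natAdd k (⟨0, hl⟩ : Fin l)).succ := by
    rw [Fin.ext_iff, Fin.val_natCast, Nat.mod_eq_of_lt (by omega)]
    rfl
  have hlam := lam0_nonneg k l
  have hfac := leafFactor_nonneg (k + l)
  have hrho : 0 ≤ 1 - rho A w := sub_nonneg.2 (rho_le_one A w)
  set c := lam0 k l * leafFactor (k + l) * (1 - rho A w) ^ (k + l - 1) with hc
  rw [hout, hin]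
  calc l * sCond k l A (Fin.natAdd k (⟨0, hl⟩ : Fin l)).succ w
        + k * sCond k l A (Fin.castAdd l (⟨0, hk⟩ : Fin k)).succ w
      ≤ rhoPIn A Set.univ w * c + rhoMIn A Set.univ w * c :=
        add_le_add (mul_sCond_in_le hA _ w) (mul_sCond_out_le hA _ w)
    _ = rhoIn A Set.univ w * c := by rw [← add_mul, rhoPIn_add_rhoMIn hA]
    _ ≤ rho A w * c := by gcongr; exact rhoIn_le_rho A _ w
    _ = _ := by rw [hc]; ring

lemma sCondOn_forall_mem_le_lam0_mul (hA : ∀ u v, A u v → ¬ A v u) (B : Set V) (v : V) :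
    sCondOn k l A v (fun φ => ∀ i : Fin (k + l), φ i.succ ∈ B) ≤
      lam0 k l * rhoIn A B v ^ (k + l) :=
  calc _ ≤ rhoPIn A B v ^ k * rhoMIn A B v ^ l := sCondOn_forall_mem_le B
    _ ≤ lam0 k l * (rhoPIn A B v + rhoMIn A B v) ^ (k + l) :=
        pow_mul_pow_le_lam0_mul k l (rhoPIn_nonneg A B v) (rhoMIn_nonneg A B v)
    _ = lam0 k l * rhoIn A B v ^ (k + l) := by rw [rhoPIn_add_rhoMIn hA]

lemma sCond_zero_le (hA : ∀ u v, A u v → ¬ A v u) (v : V) :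
    sCond k l A 0 v ≤ lam0 k l * rho A v ^ (k + l) := by
  have hlam := lam0_nonneg k l
  have hrho := rhoIn_nonneg A Set.univ v
  calc sCond k l A 0 v = sCondOn k l A v (fun φ => ∀ i : Fin (k + l), φ i.succ ∈ Set.univ) := by
        simp only [sCond_zero_eq_sCondOn, Set.mem_univ, implies_true]
    _ ≤ lam0 k l * rhoIn A Set.univ v ^ (k + l) := sCondOn_forall_mem_le_lam0_mul hA _ v
    _ ≤ lam0 k l * rho A v ^ (k + l) := by gcongr; exact rhoIn_le_rho A _ v

lemma sum_sCondOn_mem_le (hA : ∀ u v, A u v → ¬ A v u) {B : Set V} {δ : ℝ}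
    (hδ : 0 ≤ δ) (hB : ∀ w ∈ B, 1 - rho A w ≤ δ) (v : V) :
    ∑ i : Fin (k + l), sCondOn k l A v (fun φ => φ i.succ ∈ B) ≤
      lam0 k l * (leafFactor (k + l) * δ ^ (k + l - 1)) := by
  have hlam := lam0_nonneg k l
  have hfac := leafFactor_nonneg (k + l)
  set c := lam0 k l * leafFactor (k + l) * δ ^ (k + l - 1) with hc
  have hpin : ∀ w ∈ B, lam0 k l * leafFactor (k + l) * (1 - rho A w) ^ (k + l - 1) /
      Fintype.card V ≤ c / Fintype.card V := fun w hw => by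
    have hrho := sub_nonneg.2 (rho_le_one A w)
    have hw' := hB w hw
    rw [hc]
    gcongr
  have hout (i : Fin k) : k * sCondOn k l A v (fun φ => φ (Fin.castAdd l i).succ ∈ B) ≤
      rhoPIn A B v * c :=
    mul_sCondOn_le_muSet_mul (S := {u | A v u ∧ u ∈ B}) (Nat.cast_nonneg k)
      (fun _ hφ hv hmem => ⟨hv ▸ hφ.arc_out i, hmem⟩)
      fun w hw => (mul_sCondOn_out_eq_le hA i v w).trans (hpin w hw.2)
  have hin (j : Fin l) : l * sCondOn k l A v (fun φ => φ (Fin.natAdd k j).succ ∈ B) ≤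
      rhoMIn A B v * c :=
    mul_sCondOn_le_muSet_mul (S := {u | A u v ∧ u ∈ B}) (Nat.cast_nonneg l)
      (fun _ hφ hv hmem => ⟨hv ▸ hφ.arc_in j, hmem⟩)
      fun w hw => (mul_sCondOn_in_eq_le hA j v w).trans (hpin w hw.2)
  have hc0 : 0 ≤ c := by positivity
  calc ∑ i : Fin (k + l), sCondOn k l A v (fun φ => φ i.succ ∈ B)
      = ∑ i, sCondOn k l A v (fun φ => φ (Fin.castAdd l i).succ ∈ B)
        + ∑ j, sCondOn k l A v (fun φ => φ (Fin.natAdd k j).succ ∈ B) := Fin.sum_univ_add _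
    _ ≤ rhoPIn A B v * c + rhoMIn A B v * c :=
        add_le_add (sum_le_of_natCast_mul_le (mul_nonneg (rhoPIn_nonneg A B v) hc0) hout)
          (sum_le_of_natCast_mul_le (mul_nonneg (rhoMIn_nonneg A B v) hc0) hin)
    _ = rhoIn A B v * c := by rw [← add_mul, rhoPIn_add_rhoMIn hA]
    _ ≤ 1 * c := by gcongr; exact (rhoIn_le_rho A B v).trans (rho_le_one A v)
    _ = _ := by rw [one_mul, hc, mul_assoc]

lemma sCond_zero_le_forall_add_sum (B : Set V) (v : V) :
    sCond k l A 0 v ≤ sCondOn k l A v (fun φ => ∀ i : Fin (k + l), φ i.succ ∈ Bᶜ)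
      + ∑ i : Fin (k + l), sCondOn k l A v (fun φ => φ i.succ ∈ B) := by
  let Q : Option (Fin (k + l)) → (Fin (k + l + 1) → V) → Prop
    | none => fun φ => ∀ i : Fin (k + l), φ i.succ ∈ Bᶜ
    | some i => fun φ => φ i.succ ∈ B
  calc sCond k l A 0 v = sCondOn k l A v (fun _ => True) := sCond_zero_eq_sCondOn v
    _ ≤ ∑ i, sCondOn k l A v (Q i) := sCondOn_le_sum fun φ _ _ _ => by
        by_cases h : ∃ i : Fin (k + l), φ i.succ ∈ B
        · exact h.elim fun i hi => ⟨some i, hi⟩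
        · exact ⟨none, fun i hi => h ⟨i, hi⟩⟩
    _ = _ := Fintype.sum_option _

lemma sCond_zero_le_of_one_sub_rho_le (hA : ∀ u v, A u v → ¬ A v u) {B : Set V} {δ : ℝ}
    (hδ : 0 ≤ δ) (hB : ∀ w ∈ B, 1 - rho A w ≤ δ) (v : V) :
    sCond k l A 0 v ≤
      lam0 k l * ((1 - muSet B) ^ (k + l) + leafFactor (k + l) * δ ^ (k + l - 1)) := by
  have : Nonempty V := ⟨v⟩
  have hlam := lam0_nonneg k l
  have hrho := rhoIn_nonneg A Bᶜ v
  calc sCond k l A 0 v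
      ≤ sCondOn k l A v (fun φ => ∀ i : Fin (k + l), φ i.succ ∈ Bᶜ)
        + ∑ i : Fin (k + l), sCondOn k l A v (fun φ => φ i.succ ∈ B) :=
        sCond_zero_le_forall_add_sum B v
    _ ≤ lam0 k l * rhoIn A Bᶜ v ^ (k + l)
        + lam0 k l * (leafFactor (k + l) * δ ^ (k + l - 1)) :=
        add_le_add (sCondOn_forall_mem_le_lam0_mul hA Bᶜ v) (sum_sCondOn_mem_le hA hδ hB v)
    _ ≤ lam0 k l * (1 - muSet B) ^ (k + l)
        + lam0 k l * (leafFactor (k + l) * δ ^ (k + l - 1)) := by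
        rw [← muSet_compl]
        gcongr
        exact rhoIn_le_muSet A _ v
    _ = _ := (mul_add _ _ _).symm

lemma div_succ_pow_le_add_of_le_sVert (hk : 1 ≤ k) (hl : 1 ≤ l) (hA : ∀ u v, A u v → ¬ A v u)
    {C : ℝ}
    (hs : (k : ℝ) ^ k * (l : ℝ) ^ l / ((k : ℝ) + l + 1) ^ (k + l + 1) ≤ sVert k l A v)
    (hC : sCond k l A 0 v ≤ lam0 k l * C) :
    (((k + l : ℕ) : ℝ) / (((k + l : ℕ) : ℝ) + 1)) ^ (k + l) ≤
      C + leafFactor (k + l) * (rho A v * (1 - rho A v) ^ (k + l - 1)) := by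
  refine le_of_mul_le_mul_left ?_ (lam0_pos hk hl)
  push_cast
  rw [sVert, le_div_iff₀ (by positivity), pow_succ, div_mul_eq_mul_div,
    mul_div_mul_right _ _ (by positivity), ← lam0_mul_div_succ_pow] at hs
  linarith [mul_sCond_leaves_le hk hl hA v]

lemma three_quarters_le_rho (hk : 1 ≤ k) (hl : 1 ≤ l) (hm : 6 ≤ k + l)
    (hA : ∀ u v, A u v → ¬ A v u)
    (hs : (k : ℝ) ^ k * (l : ℝ) ^ l / ((k : ℝ) + l + 1) ^ (k + l + 1) ≤ sVert k l A v)
    (hv : v ∈ bigX A) : 3 / 4 ≤ rho A v := by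
  by_contra! hlt
  exact (pow_add_leafFactor_mul_lt hm hv hlt.le).not_ge
    (div_succ_pow_le_add_of_le_sVert hk hl hA hs (sCond_zero_le hA v))

end Stars

section Optimum

lemma pow_mul_pow_div_le_OPT_self (k : ℕ) :
    (k : ℝ) ^ k * (k : ℝ) ^ k / ((k : ℝ) + k + 1) ^ (k + k + 1) ≤ OPT k k := by
  set a : ℝ := 1 / ((k : ℝ) + k + 1) with ha
  have h1a : 1 - a = 2 * k / ((k : ℝ) + k + 1) := by rw [ha]; field_simp; ring
  have ha0 : 0 ≤ a := by positivity
  have ha1 : 0 ≤ 1 - a := by rw [h1a]; positivity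
  have hset : {y : ℝ | ∃ a ∈ Set.Icc (0 : ℝ) 1,
      y = a * (1 - a) ^ (2 * k) + (1 - a) * a ^ (2 * k)} =
      (fun a : ℝ => a * (1 - a) ^ (2 * k) + (1 - a) * a ^ (2 * k)) '' Set.Icc 0 1 :=
    Set.ext fun y => exists_congr fun a => and_congr_right fun _ => eq_comm
  rw [OPT, if_pos rfl, hset]
  calc (k : ℝ) ^ k * (k : ℝ) ^ k / ((k : ℝ) + k + 1) ^ (k + k + 1)
      = 1 / 2 ^ (2 * k) * (a * (1 - a) ^ (2 * k)) := by
        rw [h1a, ha, div_pow, mul_pow, ← two_mul k, pow_succ]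
        field_simp
        ring
    _ ≤ 1 / 2 ^ (2 * k) * (a * (1 - a) ^ (2 * k) + (1 - a) * a ^ (2 * k)) := by
        gcongr
        exact le_add_of_nonneg_right (by positivity)
    _ ≤ _ := by
        gcongr
        exact le_sSup_image_of_continuousOn isCompact_Icc (f := fun a : ℝ =>
          a * (1 - a) ^ (2 * k) + (1 - a) * a ^ (2 * k)) (by fun_prop) ⟨ha0, sub_nonneg.1 ha1⟩

lemma pow_mul_pow_div_le_OPT_of_ne {k l : ℕ} (hk : 1 ≤ k) (hl : 1 ≤ l) (hkl : k ≠ l) :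
    (k : ℝ) ^ k * (l : ℝ) ^ l / ((k : ℝ) + l + 1) ^ (k + l + 1) ≤ OPT k l := by
  have hk' : (0 : ℝ) ≤ k - 1 := by rw [sub_nonneg]; exact_mod_cast hk
  have hl' : (1 : ℝ) ≤ l := by exact_mod_cast hl
  set q : ℝ := ((k : ℝ) - 1) ^ (k - 1) * (l : ℝ) ^ l / ((k : ℝ) + (l : ℝ) - 1) ^ (k + l - 1)
  have hq0 : 0 ≤ q := by
    have : (0 : ℝ) ≤ k + l - 1 := by linarith
    positivity
  set f : ℝ × ℝ → ℝ := fun p => p.1 * (1 - p.1) ^ (k + l) * p.2 ^ k * (1 - p.2) ^ l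
    + q * (1 - p.1) * p.1 ^ (k + l) * (1 - p.2)
  have hset : {y : ℝ | ∃ a ∈ Set.Icc (0 : ℝ) (1 / 2), ∃ d ∈ Set.Icc (0 : ℝ) ((k : ℝ) / (k + l)),
      y = a * (1 - a) ^ (k + l) * d ^ k * (1 - d) ^ l + q * (1 - a) * a ^ (k + l) * (1 - d)} =
      f '' (Set.Icc 0 (1 / 2) ×ˢ Set.Icc 0 ((k : ℝ) / (k + l))) := by
    ext y
    constructor
    · rintro ⟨a, ha, d, hd, rfl⟩
      exact ⟨(a, d), ⟨ha, hd⟩, rfl⟩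
    · rintro ⟨⟨a, d⟩, ⟨ha, hd⟩, rfl⟩
      exact ⟨a, ha, d, hd, rfl⟩
  set a : ℝ := 1 / ((k : ℝ) + l + 1) with ha
  set d : ℝ := (k : ℝ) / (k + l) with hd
  have h1a : 1 - a = ((k : ℝ) + l) / ((k : ℝ) + l + 1) := by rw [ha]; field_simp; ring
  have h1d : 1 - d = (l : ℝ) / (k + l) := by rw [hd]; field_simp; ring
  have ha0 : 0 ≤ a := by positivity
  have ha1 : 0 ≤ 1 - a := by rw [h1a]; positivity
  have hd1 : 0 ≤ 1 - d := by rw [h1d]; positivity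
  rw [OPT, if_neg hkl, hset]
  calc (k : ℝ) ^ k * (l : ℝ) ^ l / ((k : ℝ) + l + 1) ^ (k + l + 1)
      = a * (1 - a) ^ (k + l) * d ^ k * (1 - d) ^ l := by
        rw [h1a, h1d, ha, hd]
        simp only [div_pow, pow_succ, pow_add]
        field_simp
    _ ≤ f (a, d) := le_add_of_nonneg_right (by positivity)
    _ ≤ _ := le_sSup_image_of_continuousOn (isCompact_Icc.prod isCompact_Icc) (by fun_prop)
        ⟨⟨ha0, one_div_le_one_div_of_le two_pos (by linarith)⟩, by positivity, le_rfl⟩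

/-- The first summand of the objective is maximal at `α = 1 / (m + 1)` and `d = k / m`, where
`m = k + l`; the bound is its value there. -/
lemma pow_mul_pow_div_le_OPT {k l : ℕ} (hk : 1 ≤ k) (hl : 1 ≤ l) :
    (k : ℝ) ^ k * (l : ℝ) ^ l / ((k : ℝ) + l + 1) ^ (k + l + 1) ≤ OPT k l := by
  rcases eq_or_ne k l with rfl | hkl
  · exact pow_mul_pow_div_le_OPT_self k
  · exact pow_mul_pow_div_le_OPT_of_ne hk hl hkl

end Optimum

theorem stmt13_general {k l : ℕ} (hk : 1 ≤ k) (hl : 1 ≤ l) (hm : 6 ≤ k + l) {V : Type*} [Fintype V]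
    {A : V → V → Prop} (hA : ∀ u v, A u v → ¬ A v u)
    (hX : ∀ v ∈ bigX A,
      (k : ℝ) ^ k * (l : ℝ) ^ l / ((k : ℝ) + l + 1) ^ (k + l + 1) ≤ sVert k l A v) :
    alphaX A ≤ 1 / ((k : ℝ) + l) := by
  rcases (bigX A).eq_empty_or_nonempty with hempty | ⟨x, hx⟩
  · rw [alphaX, hempty, muSet_empty]
    positivity
  by_contra! hα
  have : Nonempty V := ⟨x⟩
  have degree : ∀ w ∈ bigX A, 1 - rho A w ≤ 1 / 4 := fun w hw => by
    linarith [three_quarters_le_rho hk hl hm hA (hX w hw) hw]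
  have balance := div_succ_pow_le_add_of_le_sVert hk hl hA (hX x hx)
    (sCond_zero_le_of_one_sub_rho_le hA (by norm_num) degree x)
  have center : (1 - muSet (bigX A)) ^ (k + l) ≤ (1 - 1 / ((k + l : ℕ) : ℝ)) ^ (k + l) := by
    push_cast
    exact pow_le_pow_left₀ (sub_nonneg.2 (muSet_le_one _)) (sub_le_sub_left hα.le 1) _
  have leaves := mul_le_mul_of_nonneg_left
    (rho_mul_one_sub_pow_le (degree x hx) (k + l - 1)) (leafFactor_nonneg (k + l))
  linarith [one_sub_inv_pow_add_leafFactor_mul_lt hm]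

theorem stmt13 (k l : ℕ) (hl : 1 ≤ l) (hlk : l ≤ k) (hm : 6 ≤ k + l)
    (V : Type) [Fintype V] (A : V → V → Prop)
    (hirr : Irreflexive A) (hopp : ∀ u v, A u v → ¬ A v u) (hn : 1 ≤ Fintype.card V)
    (hvert : ∀ v : V, OPT k l ≤ sVert k l A v) :
    alphaX A ≤ 1 / ((k : ℝ) + l) :=
  stmt13_general (hl.trans hlk) hl hm hopp fun v _ =>
    (pow_mul_pow_div_le_OPT (hl.trans hlk) hl).trans (hvert v)
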